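/- The infinite series identity 16√3/3 = Σ_{k=0}^{∞} (1/4)^k · [(1/2)_k (5/6)_k (7/6)_k] / [(1)_k (4/3)_k (4/3)_k] · (18k + 7) holds, where the sum is over natural numbers k and all quantities are real numbers. -/

import Mathlib

noncomputable def risingFactorial (a : ℝ) (k : ℕ) : ℝ := ∏ i ∈ Finset.range k, (a + i)

/-!
The series is, up to a factor `6`, the value at `a = 7/12`, `b = 1/4`, `x = -5/6` of a
`₅F₄(1/4)` series `S(x)` of Gosper and Gessel–Stanton.

Zeilberger's method gives `(a-b+1+x)(a+b+1/2+x) S(x+1) = (a+1/2+x)(a+1+x) S(x)`. As `N → ∞`,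
`S(x+N)` tends by dominated convergence to a limit that does not depend on `x`, so iterating the
recurrence and using Euler's limit formula for `1/Γ` evaluates `S(x)` up to a constant factor. The
factor is read off at `x = 0`, where only the term `k = 0` survives.
-/

open Filter Topology Finset

section RisingFactorial

theorem risingFactorial_zero (s : ℝ) : risingFactorial s 0 = 1 :=
  prod_range_zero _

theorem risingFactorial_succ (s : ℝ) (k : ℕ) :
    risingFactorial s (k + 1) = risingFactorial s k * (s + k) :=
  prod_range_succ _ _

theorem risingFactorial_succ_left (s : ℝ) (k : ℕ) :
    risingFactorial s (k + 1) = s * risingFactorial (s + 1) k := by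
  simp only [risingFactorial, prod_range_succ', Nat.cast_add, Nat.cast_one, Nat.cast_zero,
    add_zero, mul_comm s, add_assoc, add_comm (1 : ℝ)]

theorem risingFactorial_ne_zero {s : ℝ} (hs : ∀ k : ℕ, s + k ≠ 0) (k : ℕ) :
    risingFactorial s k ≠ 0 :=
  prod_ne_zero_iff.2 fun i _ => hs i

theorem risingFactorial_neg_natCast_succ_eq_zero {m n : ℕ} (h : m ≤ n) :
    risingFactorial (-m) (n + 1) = 0 :=
  prod_eq_zero (mem_range.2 (Nat.lt_succ_of_le h)) (neg_add_cancel (m : ℝ))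

/-- At the poles `s = 0, -1, …` this still says `1 / Γ(s) = 0`, because there `Real.Gamma` takes
the value `0`. -/
theorem tendsto_risingFactorial_div_rpow_mul_factorial (s : ℝ) :
    Tendsto (fun n : ℕ => risingFactorial s (n + 1) / ((n : ℝ) ^ s * n.factorial)) atTop
      (𝓝 (Real.Gamma s)⁻¹) := by
  by_cases hs : ∃ m : ℕ, s = -m
  · obtain ⟨m, rfl⟩ := hs
    rw [Real.Gamma_neg_nat_eq_zero, inv_zero]
    refine tendsto_const_nhds.congr' ?_
    filter_upwards [eventually_ge_atTop m] with n hn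
    rw [risingFactorial_neg_natCast_succ_eq_zero hn, zero_div]
  · have hΓ : Real.Gamma s ≠ 0 := Real.Gamma_ne_zero (not_exists.1 hs)
    exact ((Real.GammaSeq_tendsto_Gamma s).inv₀ hΓ).congr fun n => inv_div _ _

theorem div_Gamma_mul_Gamma_eq_of_tendsto {p q r s u v : ℝ} {y : ℕ → ℝ} (h : p + q = r + s)
    (hy : Tendsto y atTop (𝓝 u))
    (hyv : ∀ n, risingFactorial p n * risingFactorial q n * y n =
      risingFactorial r n * risingFactorial s n * v) :
    u / (Real.Gamma p * Real.Gamma q) = v / (Real.Gamma r * Real.Gamma s) := by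
  let E (t : ℝ) (n : ℕ) : ℝ := risingFactorial t (n + 1) / ((n : ℝ) ^ t * n.factorial)
  have hE (t : ℝ) : Tendsto (E t) atTop (𝓝 (Real.Gamma t)⁻¹) :=
    tendsto_risingFactorial_div_rpow_mul_factorial t
  have hl := ((hE p).mul (hE q)).mul (hy.comp (tendsto_add_atTop_nat 1))
  have hr := ((hE r).mul (hE s)).mul_const v
  have hE_eq : ∀ᶠ n in atTop, E r n * E s n * v = E p n * E q n * y (n + 1) := by
    filter_upwards [eventually_gt_atTop 0] with n hn
    have hpow : (n : ℝ) ^ p * (n : ℝ) ^ q = (n : ℝ) ^ r * (n : ℝ) ^ s := by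
      rw [← Real.rpow_add (by positivity), h, Real.rpow_add (by positivity)]
    dsimp only [E]
    rw [div_mul_div_comm, div_mul_div_comm, mul_mul_mul_comm (_ ^ r), mul_mul_mul_comm (_ ^ p),
      hpow, div_mul_eq_mul_div, div_mul_eq_mul_div, hyv]
  have hlim := tendsto_nhds_unique hl (hr.congr' hE_eq)
  rw [div_eq_inv_mul, div_eq_inv_mul, mul_inv, mul_inv, hlim]

end RisingFactorial

theorem tendsto_add_natCast_div_add_natCast (p q : ℝ) :
    Tendsto (fun k : ℕ => (p + k) / (q + k)) atTop (𝓝 1) := by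
  simpa using tendsto_add_mul_div_add_mul_atTop_nhds p q 1 one_ne_zero

theorem summable_of_tendsto_ratio {u q : ℕ → ℝ} {l : ℝ} (hl : |l| < 1)
    (hu : ∀ᶠ k in atTop, u (k + 1) = q k * u k) (hq : Tendsto q atTop (𝓝 l)) : Summable u := by
  obtain ⟨r, hlr, hr⟩ := exists_between hl
  refine summable_of_ratio_norm_eventually_le hr ?_
  filter_upwards [hu, hq.abs.eventually_le_const hlr] with k hk hqk
  rw [hk, norm_mul, Real.norm_eq_abs (q k)]
  gcongr

/-- The part `4⁻ᵏ (2a)ₖ (2b)ₖ (1-2b)ₖ / ((1)ₖ (a-b+1)ₖ (a+b+1/2)ₖ)` of the Gessel–Stanton summand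
that does not depend on `x`. -/
noncomputable def gesselStantonWeight (a b : ℝ) (k : ℕ) : ℝ :=
  (1 / 4) ^ k * (risingFactorial (2 * a) k * risingFactorial (2 * b) k *
      risingFactorial (1 - 2 * b) k) /
    (risingFactorial 1 k * risingFactorial (a - b + 1) k * risingFactorial (a + b + 1 / 2) k)

/-- The part `(-x)ₖ / (2a+1+2x)ₖ` of the Gessel–Stanton summand that depends on `x`. -/
noncomputable def gesselStantonRatio (a x : ℝ) (k : ℕ) : ℝ :=
  risingFactorial (-x) k / risingFactorial (2 * a + 1 + 2 * x) k

/-- The Gessel–Stanton series, for `a ≠ 0` equal to `2a` times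
`₅F₄(2a, 2b, 1-2b, 1+2a/3, -x; a-b+1, a+b+1/2, 2a/3, 2a+1+2x; 1/4)`. The parameter pair
`1+2a/3`, `2a/3` contributes `(3k+2a)/2a`, which appears here as the linear factor `3k+2a`. -/
noncomputable def gesselStantonSum (a b x : ℝ) : ℝ :=
  ∑' k : ℕ, gesselStantonWeight a b k * gesselStantonRatio a x k * (3 * k + 2 * a)

variable {a b x : ℝ}

section Summability

theorem gesselStantonWeight_succ (a b : ℝ) (k : ℕ) :
    gesselStantonWeight a b (k + 1) =
      1 / 4 * ((2 * a + k) / (1 + k) * ((2 * b + k) / (a - b + 1 + k)) *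
        ((1 - 2 * b + k) / (a + b + 1 / 2 + k))) * gesselStantonWeight a b k := by
  simp only [gesselStantonWeight, risingFactorial_succ, pow_succ]
  simp only [div_eq_mul_inv, mul_inv]
  ring

theorem gesselStantonRatio_succ (a x : ℝ) (k : ℕ) :
    gesselStantonRatio a x (k + 1) =
      (-x + k) / (2 * a + 1 + 2 * x + k) * gesselStantonRatio a x k := by
  simp only [gesselStantonRatio, risingFactorial_succ, mul_div_mul_comm, mul_comm]

theorem eventually_three_mul_add_ne_zero (c : ℝ) : ∀ᶠ k : ℕ in atTop, 3 * (k : ℝ) + c ≠ 0 := by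
  have h : Tendsto (fun k : ℕ => 3 * (k : ℝ) + c) atTop atTop :=
    tendsto_atTop_add_const_right _ _
      (tendsto_natCast_atTop_atTop.const_mul_atTop three_pos)
  exact h.eventually_ne_atTop 0

theorem summable_gesselStantonWeight_mul {y t : ℕ → ℝ} (hy : ∀ k, y (k + 1) = t k * y k)
    (ht : Tendsto t atTop (𝓝 1)) :
    Summable fun k : ℕ => gesselStantonWeight a b k * y k * (3 * k + 2 * a) := by
  let q (k : ℕ) : ℝ := 1 / 4 * ((2 * a + k) / (1 + k) * ((2 * b + k) / (a - b + 1 + k)) *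
    ((1 - 2 * b + k) / (a + b + 1 / 2 + k))) * t k *
    ((2 * a + 3 + 3 * k) / (2 * a + 3 * k))
  have hq : Tendsto q atTop (𝓝 (1 / 4 * (1 * 1 * 1) * 1 * (3 / 3))) :=
    (((((tendsto_add_natCast_div_add_natCast _ _).mul
      (tendsto_add_natCast_div_add_natCast _ _)).mul
      (tendsto_add_natCast_div_add_natCast _ _)).const_mul _).mul ht).mul
      (tendsto_add_mul_div_add_mul_atTop_nhds _ _ _ three_ne_zero)
  refine summable_of_tendsto_ratio (by norm_num [abs_of_pos]) ?_ hq
  filter_upwards [eventually_three_mul_add_ne_zero (2 * a)] with k hk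
  have hlinear : 3 * ((k + 1 : ℕ) : ℝ) + 2 * a =
      (2 * a + 3 + 3 * k) / (2 * a + 3 * k) * (3 * k + 2 * a) := by
    rw [add_comm (2 * a) (3 * (k : ℝ)), div_mul_cancel₀ _ hk]
    push_cast
    ring
  rw [gesselStantonWeight_succ, hy, hlinear]
  ring

theorem summable_gesselStanton (a b x : ℝ) : Summable fun k : ℕ =>
    gesselStantonWeight a b k * gesselStantonRatio a x k * (3 * k + 2 * a) :=
  summable_gesselStantonWeight_mul (gesselStantonRatio_succ a x)
    (tendsto_add_natCast_div_add_natCast _ _)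

theorem summable_gesselStantonWeight (a b : ℝ) : Summable fun k : ℕ =>
    gesselStantonWeight a b k * (3 * k + 2 * a) := by
  simpa using summable_gesselStantonWeight_mul (a := a) (b := b) (y := 1) (t := 1) (by simp)
    tendsto_const_nhds

end Summability

section Recurrence

theorem gesselStantonRatio_add_one_succ (hx : ∀ k : ℕ, 2 * a + 1 + 2 * x + k ≠ 0) (k : ℕ) :
    gesselStantonRatio a (x + 1) (k + 1) =
      (-x - 1) * ((2 * a + 1 + 2 * x) * (2 * a + 1 + 2 * x + 1)) /
        ((2 * a + 1 + 2 * x + k) * (2 * a + 1 + 2 * x + k + 1) * (2 * a + 1 + 2 * x + k + 2)) *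
        gesselStantonRatio a x k := by
  have hnum : risingFactorial (-(x + 1)) (k + 1) = (-x - 1) * risingFactorial (-x) k := by
    rw [risingFactorial_succ_left]
    ring_nf
  have hd_zero := hx 0
  have hd_one := hx 1
  have hden : (2 * a + 1 + 2 * x) * ((2 * a + 1 + 2 * x + 1) *
        risingFactorial (2 * a + 1 + 2 * (x + 1)) (k + 1)) =
      risingFactorial (2 * a + 1 + 2 * x) k * (2 * a + 1 + 2 * x + k) *
        (2 * a + 1 + 2 * x + k + 1) * (2 * a + 1 + 2 * x + k + 2) := by
    rw [show 2 * a + 1 + 2 * (x + 1) = 2 * a + 1 + 2 * x + 1 + 1 by ring,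
      ← risingFactorial_succ_left, ← risingFactorial_succ_left, risingFactorial_succ,
      risingFactorial_succ, risingFactorial_succ]
    push_cast
    ring
  simp only [Nat.cast_zero, Nat.cast_one, add_zero] at hd_zero hd_one
  rw [gesselStantonRatio, gesselStantonRatio, hnum, div_mul_div_comm,
    ← mul_div_mul_left _ _ (mul_ne_zero hd_zero hd_one),
    mul_assoc _ _ (risingFactorial _ (k + 1)), hden]
  congr 1 <;> ring

theorem gesselStantonWeight_mul (he : ∀ k : ℕ, a - b + 1 + k ≠ 0)
    (hf : ∀ k : ℕ, a + b + 1 / 2 + k ≠ 0) (k : ℕ) :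
    (2 * a + k) * (2 * b + k) * (1 - 2 * b + k) * gesselStantonWeight a b k =
      4 * (1 + k) * (a - b + 1 + k) * (a + b + 1 / 2 + k) * gesselStantonWeight a b (k + 1) := by
  have hk : (1 : ℝ) + k ≠ 0 := by positivity
  have hek := he k
  have hfk := hf k
  rw [gesselStantonWeight_succ]
  -- Otherwise `field_simp` rewrites the `1 / 2` and no longer recognizes `hfk`.
  generalize a + b + 1 / 2 + (k : ℝ) = f at *
  field_simp

/-- The rational certificate in Zeilberger's method. Its product with the `k`-th summand, without
the factor `3k+2a`, is the sum over `j ≤ k` of the recurrence in `x` applied to the `j`-th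
summand. -/
noncomputable def gesselStantonCertificate (a b x : ℝ) (k : ℕ) : ℝ :=
  (a + 1 / 2 + x) * (a + 1 + x) * ((2 * a + k) * (2 * b + k) * (1 - 2 * b + k)) /
    ((2 * a + 1 + 2 * x + k) * (2 * a + 1 + 2 * x + k + 1))

theorem gesselStantonCertificate_zero (hx : ∀ k : ℕ, 2 * a + 1 + 2 * x + k ≠ 0) :
    gesselStantonCertificate a b x 0 = a * b * (1 - 2 * b) := by
  rw [gesselStantonCertificate, div_eq_iff (mul_ne_zero (hx 0) (by simpa using hx 1))]
  push_cast
  ring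

theorem gesselStantonCertificate_mul_succ_sub (he : ∀ k : ℕ, a - b + 1 + k ≠ 0)
    (hf : ∀ k : ℕ, a + b + 1 / 2 + k ≠ 0) (hx : ∀ k : ℕ, 2 * a + 1 + 2 * x + k ≠ 0) (k : ℕ) :
    gesselStantonCertificate a b x (k + 1) *
        (gesselStantonWeight a b (k + 1) * gesselStantonRatio a x (k + 1)) -
      gesselStantonCertificate a b x k *
        (gesselStantonWeight a b k * gesselStantonRatio a x k) =
    gesselStantonWeight a b (k + 1) *
      ((a - b + 1 + x) * (a + b + 1 / 2 + x) * gesselStantonRatio a (x + 1) (k + 1) -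
        (a + 1 / 2 + x) * (a + 1 + x) * gesselStantonRatio a x (k + 1)) *
      (3 * (k + 1 : ℕ) + 2 * a) := by
  have hcert : gesselStantonCertificate a b x k *
        (gesselStantonWeight a b k * gesselStantonRatio a x k) =
      (a + 1 / 2 + x) * (a + 1 + x) * (4 * (1 + k) * (a - b + 1 + k) * (a + b + 1 / 2 + k) *
        gesselStantonWeight a b (k + 1)) /
        ((2 * a + 1 + 2 * x + k) * (2 * a + 1 + 2 * x + k + 1)) * gesselStantonRatio a x k := by
    rw [← gesselStantonWeight_mul he hf, gesselStantonCertificate]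
    ring
  have hk0 := hx k
  have hk1 := hx (k + 1)
  have hk2 := hx (k + 2)
  rw [hcert, gesselStantonRatio_add_one_succ hx, gesselStantonRatio_succ, gesselStantonCertificate]
  -- With `x` eliminated, every denominator is an atom `d + k + i`, which `field_simp` can clear.
  obtain ⟨d, hd⟩ : ∃ d, d = 2 * a + 1 + 2 * x := ⟨_, rfl⟩
  obtain rfl : x = (d - 1) / 2 - a := by linarith
  rw [← hd] at hk0 hk1 hk2 ⊢
  push_cast at hk1 hk2 ⊢
  rw [← add_assoc] at hk1 hk2
  rw [← add_assoc d, add_assoc (d + k) 1 1, one_add_one_eq_two]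
  field_simp
  ring

theorem sum_range_succ_gesselStanton (he : ∀ k : ℕ, a - b + 1 + k ≠ 0)
    (hf : ∀ k : ℕ, a + b + 1 / 2 + k ≠ 0) (hx : ∀ k : ℕ, 2 * a + 1 + 2 * x + k ≠ 0) (n : ℕ) :
    ∑ k ∈ range (n + 1), gesselStantonWeight a b k *
      ((a - b + 1 + x) * (a + b + 1 / 2 + x) * gesselStantonRatio a (x + 1) k -
        (a + 1 / 2 + x) * (a + 1 + x) * gesselStantonRatio a x k) * (3 * k + 2 * a) =
    gesselStantonCertificate a b x n * (gesselStantonWeight a b n * gesselStantonRatio a x n) := by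
  induction n with
  | zero =>
    rw [gesselStantonCertificate_zero hx]
    simp only [zero_add, sum_range_one, gesselStantonWeight, gesselStantonRatio,
      risingFactorial_zero, Nat.cast_zero, pow_zero, mul_one, div_one]
    ring
  | succ n ih =>
    rw [sum_range_succ, ih, ← gesselStantonCertificate_mul_succ_sub he hf hx]
    ring

theorem tendsto_gesselStantonCertificate_mul (a b x : ℝ) :
    Tendsto (fun n => gesselStantonCertificate a b x n *
      (gesselStantonWeight a b n * gesselStantonRatio a x n)) atTop (𝓝 0) := by
  let c (n : ℕ) : ℝ := (a + 1 / 2 + x) * (a + 1 + x) *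
    ((2 * a + n) / (2 * a + 1 + 2 * x + n) * ((2 * b + n) / (2 * a + 1 + 2 * x + 1 + n)) *
      ((1 - 2 * b + 1 * n) / (2 * a + 3 * n)))
  have hc : Tendsto c atTop (𝓝 ((a + 1 / 2 + x) * (a + 1 + x) * (1 * 1 * (1 / 3)))) :=
    (((tendsto_add_natCast_div_add_natCast _ _).mul
      (tendsto_add_natCast_div_add_natCast _ _)).mul
      (tendsto_add_mul_div_add_mul_atTop_nhds _ _ _ three_ne_zero)).const_mul _
  have hlim := hc.mul (summable_gesselStanton a b x).tendsto_atTop_zero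
  rw [mul_zero] at hlim
  refine hlim.congr' ?_
  filter_upwards [eventually_three_mul_add_ne_zero (2 * a)] with n hn
  simp only [c, gesselStantonCertificate, one_mul, add_comm (2 * a) (3 * (n : ℝ)),
    add_right_comm _ (1 : ℝ) (n : ℝ)]
  rw [div_mul_div_comm, div_mul_div_comm, ← mul_div_assoc, div_mul_eq_mul_div, div_mul_eq_mul_div,
    ← mul_assoc, mul_div_mul_right _ _ hn]

theorem gesselStantonSum_add_one (he : ∀ k : ℕ, a - b + 1 + k ≠ 0)
    (hf : ∀ k : ℕ, a + b + 1 / 2 + k ≠ 0) (hx : ∀ k : ℕ, 2 * a + 1 + 2 * x + k ≠ 0) :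
    (a - b + 1 + x) * (a + b + 1 / 2 + x) * gesselStantonSum a b (x + 1) =
      (a + 1 / 2 + x) * (a + 1 + x) * gesselStantonSum a b x := by
  have hsum := (((summable_gesselStanton a b (x + 1)).hasSum.mul_left
    ((a - b + 1 + x) * (a + b + 1 / 2 + x))).sub
    ((summable_gesselStanton a b x).hasSum.mul_left
      ((a + 1 / 2 + x) * (a + 1 + x)))).tendsto_sum_nat.comp (tendsto_add_atTop_nat 1)
  refine sub_eq_zero.1 (tendsto_nhds_unique hsum
    ((tendsto_gesselStantonCertificate_mul a b x).congr fun n => ?_))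
  rw [← sum_range_succ_gesselStanton he hf hx]
  exact sum_congr rfl fun k _ => by ring

theorem gesselStantonSum_add_natCast (he : ∀ k : ℕ, a - b + 1 + k ≠ 0)
    (hf : ∀ k : ℕ, a + b + 1 / 2 + k ≠ 0) (hx : ∀ k : ℕ, 2 * a + 1 + 2 * x + k ≠ 0) (n : ℕ) :
    risingFactorial (a - b + 1 + x) n * risingFactorial (a + b + 1 / 2 + x) n *
        gesselStantonSum a b (x + n) =
      risingFactorial (a + 1 / 2 + x) n * risingFactorial (a + 1 + x) n *
        gesselStantonSum a b x := by
  induction n with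
  | zero => simp only [risingFactorial_zero, Nat.cast_zero, add_zero]
  | succ n ih =>
    have hxn (k : ℕ) : 2 * a + 1 + 2 * (x + n) + k ≠ 0 := by
      have := hx (2 * n + k)
      push_cast at this
      convert this using 1
      ring
    have hrec := gesselStantonSum_add_one he hf hxn
    simp only [risingFactorial_succ, Nat.cast_add, Nat.cast_one, ← add_assoc] at hrec ⊢
    linear_combination
      risingFactorial (a - b + 1 + x) n * risingFactorial (a + b + 1 / 2 + x) n * hrec +
        (a + 1 / 2 + x + n) * (a + 1 + x + n) * ih

end Recurrence

section Limit

theorem tendsto_gesselStantonRatio_add_natCast (a x : ℝ) (k : ℕ) :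
    Tendsto (fun n : ℕ => gesselStantonRatio a (x + n) k) atTop (𝓝 ((-1 / 2) ^ k)) := by
  have hfactor (i : ℕ) : Tendsto
      (fun n : ℕ => (-(x + n) + i) / (2 * a + 1 + 2 * (x + n) + i)) atTop (𝓝 (-1 / 2)) := by
    refine (tendsto_add_mul_div_add_mul_atTop_nhds (-x + i) (2 * a + 1 + 2 * x + i) (-1)
      two_ne_zero).congr fun n => ?_
    congr 1 <;> ring
  simpa only [gesselStantonRatio, risingFactorial, prod_div_distrib, prod_const, card_range,
    div_pow] using tendsto_finsetProd (range k) fun i _ => hfactor i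

theorem abs_gesselStantonRatio_le_one (hx : 0 ≤ x) (hax : 0 ≤ 2 * a + 1 + x) (k : ℕ) :
    |gesselStantonRatio a x k| ≤ 1 := by
  rw [gesselStantonRatio, risingFactorial, risingFactorial, ← prod_div_distrib, abs_prod]
  refine prod_le_one (fun i _ => abs_nonneg _) fun i _ => ?_
  have : (0 : ℝ) ≤ i := i.cast_nonneg
  have hden : 0 ≤ 2 * a + 1 + 2 * x + i := by linarith
  rw [abs_div, abs_of_nonneg hden]
  refine div_le_one_of_le₀ (abs_le.2 ⟨?_, ?_⟩) hden <;> linarith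

theorem tendsto_gesselStantonSum_add_natCast (a b x : ℝ) :
    Tendsto (fun n : ℕ => gesselStantonSum a b (x + n)) atTop
      (𝓝 (∑' k : ℕ, gesselStantonWeight a b k * (-1 / 2) ^ k * (3 * k + 2 * a))) := by
  refine tendsto_tsum_of_dominated_convergence (summable_gesselStantonWeight a b).norm
    (fun k => ((tendsto_gesselStantonRatio_add_natCast a x k).const_mul _).mul_const _) ?_
  have hx : Tendsto (fun n : ℕ => x + n) atTop atTop :=
    tendsto_atTop_add_const_left _ _ tendsto_natCast_atTop_atTop
  filter_upwards [hx.eventually_ge_atTop 0, hx.eventually_ge_atTop (-(2 * a + 1))]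
    with n hn han k
  rw [mul_right_comm, norm_mul _ (gesselStantonRatio a (x + n) k)]
  exact mul_le_of_le_one_right (norm_nonneg _)
    (abs_gesselStantonRatio_le_one hn (by linarith) k)

end Limit

section Evaluation

theorem gesselStantonSum_zero_right (a b : ℝ) : gesselStantonSum a b 0 = 2 * a := by
  rw [gesselStantonSum, tsum_eq_single 0]
  · simp [gesselStantonWeight, gesselStantonRatio, risingFactorial_zero]
  · intro k hk
    obtain ⟨m, rfl⟩ := Nat.exists_eq_succ_of_ne_zero hk
    simp [gesselStantonRatio, risingFactorial_succ_left]

theorem gesselStantonSum_div_Gamma (he : ∀ k : ℕ, a - b + 1 + k ≠ 0)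
    (hf : ∀ k : ℕ, a + b + 1 / 2 + k ≠ 0) (hx : ∀ k : ℕ, 2 * a + 1 + 2 * x + k ≠ 0) :
    gesselStantonSum a b x / (Real.Gamma (2 * a + 1 + 2 * x) * 2 ^ (-2 * a - 2 * x) * √Real.pi) =
      (∑' k : ℕ, gesselStantonWeight a b k * (-1 / 2) ^ k * (3 * k + 2 * a)) /
        (Real.Gamma (a - b + 1 + x) * Real.Gamma (a + b + 1 / 2 + x)) := by
  have hdup := Real.Gamma_mul_Gamma_add_half (a + 1 / 2 + x)
  rw [show a + 1 / 2 + x + 1 / 2 = a + 1 + x by ring,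
    show 2 * (a + 1 / 2 + x) = 2 * a + 1 + 2 * x by ring,
    show 1 - (2 * a + 1 + 2 * x) = -2 * a - 2 * x by ring] at hdup
  rw [← hdup]
  exact (div_Gamma_mul_Gamma_eq_of_tendsto (by ring) (tendsto_gesselStantonSum_add_natCast a b x)
    (gesselStantonSum_add_natCast he hf hx)).symm

theorem Gamma_ne_zero_of_add_natCast_ne_zero {s : ℝ} (hs : ∀ k : ℕ, s + k ≠ 0) :
    Real.Gamma s ≠ 0 :=
  Real.Gamma_ne_zero fun k h => hs k (eq_neg_iff_add_eq_zero.1 h)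

/-- At a pole of `Γ(a-b+1+x)` or `Γ(a+b+1/2+x)` both sides vanish: `Real.Gamma` is `0` there, which
turns the division by it into multiplication by `1 / Γ = 0`. -/
theorem gesselStantonSum_eq_Gamma (he : ∀ k : ℕ, a - b + 1 + k ≠ 0)
    (hf : ∀ k : ℕ, a + b + 1 / 2 + k ≠ 0) (ha : ∀ k : ℕ, 2 * a + 1 + k ≠ 0)
    (hx : ∀ k : ℕ, 2 * a + 1 + 2 * x + k ≠ 0) :
    gesselStantonSum a b x = 2 * a * 2 ^ (-2 * x) *
      (Real.Gamma (2 * a + 1 + 2 * x) * Real.Gamma (a - b + 1) * Real.Gamma (a + b + 1 / 2)) /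
      (Real.Gamma (2 * a + 1) * Real.Gamma (a - b + 1 + x) * Real.Gamma (a + b + 1 / 2 + x)) := by
  have h_at_zero := gesselStantonSum_div_Gamma (x := 0) he hf (by simpa using ha)
  have h_at_x := gesselStantonSum_div_Gamma he hf hx
  simp only [gesselStantonSum_zero_right, mul_zero, add_zero, sub_zero] at h_at_zero
  have hΓe := Gamma_ne_zero_of_add_natCast_ne_zero he
  have hΓf := Gamma_ne_zero_of_add_natCast_ne_zero hf
  have hΓa := Gamma_ne_zero_of_add_natCast_ne_zero ha
  have hΓx := Gamma_ne_zero_of_add_natCast_ne_zero hx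
  have hπ : √Real.pi ≠ 0 := by positivity
  have hpow : (2 : ℝ) ^ (-2 * a - 2 * x) = 2 ^ (-2 * a) * 2 ^ (-2 * x) := by
    rw [← Real.rpow_add two_pos]
    ring_nf
  rw [eq_div_iff (mul_ne_zero hΓe hΓf)] at h_at_zero
  rw [← h_at_zero, div_eq_iff (by rw [hpow]; positivity), hpow] at h_at_x
  rw [h_at_x]
  field_simp

end Evaluation

theorem Gamma_one_sixth_mul_sqrt_pi :
    Real.Gamma (1 / 6) * √Real.pi = 2 ^ (-1 / 3 : ℝ) * √3 * Real.Gamma (1 / 3) ^ 2 := by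
  have hdup : Real.Gamma (1 / 6) * Real.Gamma (2 / 3) =
      Real.Gamma (1 / 3) * 2 ^ (2 / 3 : ℝ) * √Real.pi := by
    convert Real.Gamma_mul_Gamma_add_half (1 / 6) using 3 <;> norm_num
  have hrefl : Real.Gamma (1 / 3) * Real.Gamma (2 / 3) * √3 = 2 * Real.pi := by
    have h := Real.Gamma_mul_Gamma_one_sub (1 / 3)
    rw [mul_one_div, Real.sin_pi_div_three, show (1 : ℝ) - 1 / 3 = 2 / 3 by norm_num] at h
    rw [h]
    field_simp
  have hpow : (2 : ℝ) ^ (2 / 3 : ℝ) = 2 * 2 ^ (-1 / 3 : ℝ) := by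
    rw [← Real.rpow_one_add' two_pos.le (by norm_num)]
    norm_num
  have hΓ : Real.Gamma (2 / 3) ≠ 0 := (Real.Gamma_pos_of_pos (by norm_num)).ne'
  refine mul_right_cancel₀ hΓ ?_
  rw [hpow] at hdup
  linear_combination √Real.pi * hdup - 2 ^ (-1 / 3 : ℝ) * Real.Gamma (1 / 3) * hrefl +
    2 * 2 ^ (-1 / 3 : ℝ) * Real.Gamma (1 / 3) * Real.sq_sqrt Real.pi_pos.le

theorem gesselStantonSum_seven_twelfths_one_fourth :
    gesselStantonSum (7 / 12) (1 / 4) (-5 / 6) = 8 * √3 / 9 := by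
  have hΓ_four_thirds : Real.Gamma (4 / 3) = 1 / 3 * Real.Gamma (1 / 3) := by
    rw [← Real.Gamma_add_one (by norm_num)]
    norm_num
  have hΓ_thirteen_sixths : Real.Gamma (13 / 6) = 7 / 36 * Real.Gamma (1 / 6) := by
    rw [show (13 / 6 : ℝ) = 1 / 6 + 1 + 1 by norm_num, Real.Gamma_add_one (by norm_num),
      Real.Gamma_add_one (by norm_num)]
    ring
  have hpow : (2 : ℝ) ^ (5 / 3 : ℝ) = 4 * 2 ^ (-1 / 3 : ℝ) := by
    rw [show (4 : ℝ) = 2 ^ (2 : ℝ) by norm_num, ← Real.rpow_add two_pos]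
    norm_num
  have hΓ_third : Real.Gamma (1 / 3) ≠ 0 := (Real.Gamma_pos_of_pos (by norm_num)).ne'
  calc gesselStantonSum (7 / 12) (1 / 4) (-5 / 6)
    _ = 7 / 6 * 2 ^ (5 / 3 : ℝ) * (Real.Gamma (1 / 2) * Real.Gamma (4 / 3) * Real.Gamma (4 / 3)) /
        (Real.Gamma (13 / 6) * Real.Gamma (1 / 2) * Real.Gamma (1 / 2)) := by
      rw [gesselStantonSum_eq_Gamma]
      · norm_num
      all_goals
        intro k
        norm_num
        positivity
    _ = 8 * 2 ^ (-1 / 3 : ℝ) * Real.Gamma (1 / 3) ^ 2 /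
        (3 * (Real.Gamma (1 / 6) * √Real.pi)) := by
      rw [hΓ_four_thirds, hΓ_thirteen_sixths, hpow, Real.Gamma_one_half_eq]
      field_simp
      ring
    _ = 8 * √3 / 9 := by
      rw [Gamma_one_sixth_mul_sqrt_pi]
      field_simp
      norm_num

theorem stmt_2 :
    16 * Real.sqrt 3 / 3 =
      ∑' k : ℕ, (1/4 : ℝ) ^ k * (risingFactorial (1/2) k * risingFactorial (5/6) k * risingFactorial (7/6) k) /
        (risingFactorial (1) k * risingFactorial (4/3) k * risingFactorial (4/3) k) * (18 * (k:ℝ) + 7) := by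
  have hsum : 16 * √3 / 3 = 6 * gesselStantonSum (7 / 12) (1 / 4) (-5 / 6) := by
    rw [gesselStantonSum_seven_twelfths_one_fourth]
    ring
  rw [hsum, gesselStantonSum, ← tsum_mul_left]
  refine tsum_congr fun k => ?_
  have hhalf : risingFactorial (1 / 2) k ≠ 0 :=
    risingFactorial_ne_zero (fun i => by positivity) k
  have hweight : gesselStantonWeight (7 / 12) (1 / 4) k =
      (1 / 4) ^ k * (risingFactorial (7 / 6) k * risingFactorial (1 / 2) k *
        risingFactorial (1 / 2) k) /
      (risingFactorial 1 k * risingFactorial (4 / 3) k * risingFactorial (4 / 3) k) := by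
    norm_num [gesselStantonWeight]
  have hratio : gesselStantonRatio (7 / 12) (-5 / 6) k =
      risingFactorial (5 / 6) k / risingFactorial (1 / 2) k := by
    norm_num [gesselStantonRatio]
  rw [hweight, hratio]
  field_simp
  ring
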